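/- Suppose θ has the C₄-property with respect to E, i.e., for the 4-cycle C₄ (vertices 1,2,3,4, edges 12, 23, 34, 41) one has Γ₂^{C₄}(p,f,f) ≥ Σ_{e ∈ {12,23,34,41}} Γ₂^{e}(p,f,f) for all p ∈ (0,∞)⁴ and f ∈ ℝ⁴. Let G and H be finite simple graphs and let κ ∈ ℝ be such that Γ₂^{G}(p,f,f) ≥ κ Γ₁^{G}(p,f,f) for all p ∈ (0,∞)^{V(G)}, f ∈ ℝ^{V(G)}, and Γ₂^{H}(p,f,f) ≥ κ Γ₁^{H}(p,f,f) for all p ∈ (0,∞)^{V(H)}, f ∈ ℝ^{V(H)}. Then for the Cartesian (box) product G □ H one has Γ₂^{G□H}(p,f,f) ≥ κ Γ₁^{G□H}(p,f,f) for all p ∈ (0,∞)^{V(G)×V(H)} and f ∈ ℝ^{V(G)×V(H)}. -/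

import Mathlib

/-!
For `θ = thetaU U` one has `η_{uv} = p_u - p_v` on edges, so all derivatives of `η` are constants and
`Γ₂` becomes an explicit sum over pairs of edges sharing a vertex (`Gamma2_eq`, with the bilinear
form `pathForm`).

The adjacency weight of `G □ H` is the sum of a horizontal weight (copies of `G`) and a vertical
weight (copies of `H`), see `adjW_prod`. Expanding `pathForm` bilinearly, the purely horizontal and
purely vertical parts are the sums of `Γ₂^G` and `Γ₂^H` over all copies (`pathForm_GG`,
`pathForm_HH`), and these dominate `κ Γ₁^{G □ H}` since `Γ₁` splits in the same way (`Gamma1_prod`).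
A mixed pair, one horizontal and one vertical edge, is a corner of a unique square of `G □ H`
(`pathForm_GH`, `pathForm_HG`). For each square the corner terms sum to
`2 (Γ₂^{C₄} - ∑_e Γ₂^e)`, which is nonnegative by the `C₄`-property (`C4_corner`), so the mixed part
is nonnegative.
-/

open Finset

/-- Partial derivative of `F : (V → ℝ) → ℝ` in the `i`-th coordinate at `p`. -/
noncomputable def pd {V : Type*} [DecidableEq V] (F : (V → ℝ) → ℝ) (i : V) (p : V → ℝ) : ℝ :=
  deriv (fun s => F (Function.update p i s)) (p i)

/-- The edge weight `θ_{ij}(p) = θ(p_i, p_j)` if `ij` is an edge, and `0` otherwise. -/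
noncomputable def thM {V : Type*} (A : V → V → Prop) [DecidableRel A]
    (θ : ℝ → ℝ → ℝ) (p : V → ℝ) (i j : V) : ℝ :=
  if A i j then θ (p i) (p j) else 0

/-- `η_{ij}(p) = θ_{ij}(p) (∂E/∂p_i − ∂E/∂p_j)`. -/
noncomputable def etaM {V : Type*} [DecidableEq V] (A : V → V → Prop) [DecidableRel A]
    (θ : ℝ → ℝ → ℝ) (E : (V → ℝ) → ℝ) (p : V → ℝ) (i j : V) : ℝ :=
  thM A θ p i j * (pd E i p - pd E j p)

/-- `Γ₁(p,f,f) = Σ_{i,j} θ_{ij}(p) (f_i − f_j)²`. -/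
noncomputable def Gamma1 {V : Type*} [Fintype V] (A : V → V → Prop) [DecidableRel A]
    (θ : ℝ → ℝ → ℝ) (p f : V → ℝ) : ℝ :=
  ∑ i, ∑ j, thM A θ p i j * (f i - f j)^2

/-- `Γ₂(p,f,f)`, the mean-field information Hessian quadratic form. -/
noncomputable def Gamma2 {V : Type*} [Fintype V] [DecidableEq V] (A : V → V → Prop)
    [DecidableRel A] (θ : ℝ → ℝ → ℝ) (E : (V → ℝ) → ℝ) (p f : V → ℝ) : ℝ :=
  (1/2) * ∑ i, ∑ j, ∑ k, (f i - f j)^2 *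
    (pd (fun q => thM A θ q i j) i p * etaM A θ E p k i
      + pd (fun q => etaM A θ E q i j) i p * thM A θ p k i
      + pd (fun q => etaM A θ E q j k) j p * thM A θ p i j
      - pd (fun q => etaM A θ E q k i) k p * thM A θ p j k)

/-- The weight function built from `U`: `θ(s,t) = (s−t)/(U'(s)−U'(t))` for `s ≠ t`,
and `θ(s,s) = 1/U''(s)`. -/
noncomputable def thetaU (U : ℝ → ℝ) (s t : ℝ) : ℝ :=
  if s = t then 1 / deriv (deriv U) s else (s - t) / (deriv U s - deriv U t)

/-- The entropy energy `E(p) = Σ_v U(p_v)`. -/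
noncomputable def EnU {V : Type*} [Fintype V] (U : ℝ → ℝ) (p : V → ℝ) : ℝ := ∑ v, U (p v)

/-- `Γ₂^{uv}(p,f,f)`, the single-edge contribution for the edge `uv`. -/
noncomputable def Gamma2edge {V : Type*} [Fintype V] [DecidableEq V] (A : V → V → Prop)
    [DecidableRel A] (θ : ℝ → ℝ → ℝ) (E : (V → ℝ) → ℝ) (p f : V → ℝ) (u v : V) : ℝ :=
  (f u - f v)^2 *
    (-(1/2) * (pd (fun q => thM A θ q u v) u p - pd (fun q => thM A θ q u v) v p)
        * etaM A θ E p u v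
      + (pd (fun q => etaM A θ E q u v) u p - pd (fun q => etaM A θ E q u v) v p)
        * thM A θ p u v)

/-- The 4-cycle `C₄` with vertices `0,1,2,3` in cyclic order. -/
def C4adj : Fin 4 → Fin 4 → Prop := fun i j => j = i + 1 ∨ i = j + 1

instance : DecidableRel C4adj := fun i j =>
  inferInstanceAs (Decidable (j = i + 1 ∨ i = j + 1))

/-- The adjacency relation of the Cartesian (box) product `G □ H`. -/
def prodAdj {VG VH : Type*} (AG : VG → VG → Prop) (AH : VH → VH → Prop) :
    VG × VH → VG × VH → Prop :=
  fun x y => (AG x.1 y.1 ∧ x.2 = y.2) ∨ (x.1 = y.1 ∧ AH x.2 y.2)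

instance {VG VH : Type*} [DecidableEq VG] [DecidableEq VH]
    (AG : VG → VG → Prop) (AH : VH → VH → Prop) [DecidableRel AG] [DecidableRel AH] :
    DecidableRel (prodAdj AG AH) := fun x y =>
  inferInstanceAs (Decidable ((AG x.1 y.1 ∧ x.2 = y.2) ∨ (x.1 = y.1 ∧ AH x.2 y.2)))

set_option linter.unusedSectionVars false

/-- The `0/1` adjacency weight of a relation. -/
noncomputable def adjW {V : Type*} (A : V → V → Prop) [DecidableRel A] (i j : V) : ℝ :=
  if A i j then 1 else 0

/-- First partial derivative of `θ = thetaU U`; by symmetry of `θ` it also gives the second one. -/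
noncomputable def dTheta (U : ℝ → ℝ) (s t : ℝ) : ℝ := deriv (fun r => thetaU U r t) s

/-- The sum over ordered triples that underlies `2 Γ₂` once `η_{uv} = p_u - p_v` is substituted,
polarized in the edge weights: each summand involves a pair of edges sharing a vertex, one weighted
by `a` and the other by `b`. The edge that carries the derivative `d` of `θ` is weighted by `a`. -/
noncomputable def pathForm {V : Type*} [Fintype V] (θ d : ℝ → ℝ → ℝ)
    (p f : V → ℝ) (a b : V → V → ℝ) : ℝ :=
  ∑ i, ∑ j, ∑ k, (f i - f j)^2 *
    (a i j * d (p i) (p j) * (b k i * (p k - p i))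
      + a i j * (b k i * θ (p k) (p i))
      + b j k * (a i j * θ (p i) (p j))
      - b k i * (a j k * θ (p j) (p k)))

theorem thetaU_comm (U : ℝ → ℝ) (s t : ℝ) : thetaU U s t = thetaU U t s := by
  unfold thetaU
  by_cases h : s = t
  · simp [h]
  · rw [if_neg h, if_neg (Ne.symm h), ← neg_sub t s, ← neg_sub (deriv U t), neg_div_neg_eq]

/-- The identity `θ(s,t) (U'(s) - U'(t)) = s - t`, which makes `η` linear in `p`. Positivity of `θ`
excludes the junk value of the quotient at `U'(s) = U'(t)`. -/
theorem thetaU_mul (U : ℝ → ℝ) (s t : ℝ) (h : 0 < thetaU U s t) :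
    thetaU U s t * (deriv U s - deriv U t) = s - t := by
  unfold thetaU at *
  by_cases hst : s = t
  · simp [hst]
  · rw [if_neg hst] at *
    have : deriv U s - deriv U t ≠ 0 := by
      intro h0
      simp [h0] at h
    field_simp

theorem pd_EnU {V : Type*} [Fintype V] [DecidableEq V] (U : ℝ → ℝ) (i : V) (q : V → ℝ) :
    pd (EnU U) i q = deriv U (q i) := by
  unfold pd EnU
  have : (fun s => ∑ v, U (Function.update q i s v))
      = fun s => U s + ∑ v ∈ Finset.univ.erase i, U (q v) := by
    funext s
    rw [← Finset.add_sum_erase _ _ (Finset.mem_univ i)]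
    congr 1
    · simp
    · refine Finset.sum_congr rfl fun v hv => ?_
      rw [Function.update_of_ne (Finset.ne_of_mem_erase hv)]
  rw [this, deriv_add_const]

/-! ### Explicit form of `Γ₂` and of its edge terms -/

section
variable {V : Type*} [Fintype V] [DecidableEq V]

theorem thM_eq (U : ℝ → ℝ)
    (A : V → V → Prop) [DecidableRel A]
    (p : V → ℝ) (i j : V) :
    thM A (thetaU U) p i j = adjW A i j * thetaU U (p i) (p j) := by
  unfold thM adjW
  split_ifs <;> simp

theorem etaM_eq (U : ℝ → ℝ)
    (hθ : ∀ s t : ℝ, 0 < s → 0 < t → 0 < thetaU U s t)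
    (A : V → V → Prop) [DecidableRel A]
    (p : V → ℝ) (i j : V) (hi : 0 < p i) (hj : 0 < p j) :
    etaM A (thetaU U) (EnU U) p i j = adjW A i j * (p i - p j) := by
  unfold etaM
  rw [thM_eq, pd_EnU, pd_EnU, mul_assoc, thetaU_mul _ _ _ (hθ _ _ hi hj)]

theorem pd_thM_left (U : ℝ → ℝ)
    (A : V → V → Prop) [DecidableRel A] (hirr : ∀ u, ¬ A u u)
    (p : V → ℝ) (i j : V) :
    pd (fun q => thM A (thetaU U) q i j) i p = adjW A i j * dTheta U (p i) (p j) := by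
  by_cases h : A i j
  · have hij : j ≠ i := fun e => hirr i (e ▸ h)
    simp [pd, thM, adjW, h, dTheta, hij]
  · simp [pd, thM, adjW, h]

theorem pd_thM_right (U : ℝ → ℝ)
    (A : V → V → Prop) [DecidableRel A] (hirr : ∀ u, ¬ A u u)
    (p : V → ℝ) (i j : V) :
    pd (fun q => thM A (thetaU U) q i j) j p = adjW A i j * dTheta U (p j) (p i) := by
  by_cases h : A i j
  · have hij : i ≠ j := fun e => hirr i (e ▸ h)
    simp [pd, thM, adjW, h, dTheta, hij, thetaU_comm U (p i)]
  · simp [pd, thM, adjW, h]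

theorem pd_etaM_left (U : ℝ → ℝ)
    (hθ : ∀ s t : ℝ, 0 < s → 0 < t → 0 < thetaU U s t)
    (A : V → V → Prop) [DecidableRel A] (hirr : ∀ u, ¬ A u u)
    (p : V → ℝ) (hp : ∀ v, 0 < p v) (i j : V) :
    pd (fun q => etaM A (thetaU U) (EnU U) q i j) i p = adjW A i j := by
  by_cases h : A i j
  · have hij : j ≠ i := fun e => hirr i (e ▸ h)
    have : (fun s => etaM A (thetaU U) (EnU U) (Function.update p i s) i j)
        =ᶠ[nhds (p i)] fun s => s - p j := by
      filter_upwards [lt_mem_nhds (hp i)] with s hs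
      rw [etaM_eq U hθ A _ _ _ (by simpa using hs) (by simpa [hij] using hp j)]
      simp [adjW, h, hij]
    unfold pd
    rw [this.deriv_eq]
    simp [adjW, h]
  · simp [pd, etaM, thM, adjW, h]

theorem pd_etaM_right (U : ℝ → ℝ)
    (hθ : ∀ s t : ℝ, 0 < s → 0 < t → 0 < thetaU U s t)
    (A : V → V → Prop) [DecidableRel A] (hirr : ∀ u, ¬ A u u)
    (p : V → ℝ) (hp : ∀ v, 0 < p v) (i j : V) :
    pd (fun q => etaM A (thetaU U) (EnU U) q i j) j p = -adjW A i j := by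
  by_cases h : A i j
  · have hij : i ≠ j := fun e => hirr i (e ▸ h)
    have : (fun s => etaM A (thetaU U) (EnU U) (Function.update p j s) i j)
        =ᶠ[nhds (p j)] fun s => p i - s := by
      filter_upwards [lt_mem_nhds (hp j)] with s hs
      rw [etaM_eq U hθ A _ _ _ (by simpa [hij] using hp i) (by simpa using hs)]
      simp [adjW, h, hij]
    unfold pd
    rw [this.deriv_eq]
    simp [adjW, h]
  · simp [pd, etaM, thM, adjW, h]

theorem Gamma2_eq (U : ℝ → ℝ)
    (hθ : ∀ s t : ℝ, 0 < s → 0 < t → 0 < thetaU U s t)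
    (A : V → V → Prop) [DecidableRel A] (hirr : ∀ u, ¬ A u u)
    (p : V → ℝ) (hp : ∀ v, 0 < p v) (f : V → ℝ) :
    Gamma2 A (thetaU U) (EnU U) p f
      = (1/2) * pathForm (thetaU U) (dTheta U) p f (adjW A) (adjW A) := by
  unfold Gamma2 pathForm
  simp only [pd_thM_left U A hirr, pd_etaM_left U hθ A hirr p hp]
  simp only [thM_eq, etaM_eq U hθ A p _ _ (hp _) (hp _)]

theorem Gamma2edge_eq (U : ℝ → ℝ)
    (hθ : ∀ s t : ℝ, 0 < s → 0 < t → 0 < thetaU U s t)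
    (A : V → V → Prop) [DecidableRel A] (hirr : ∀ u, ¬ A u u)
    (p : V → ℝ) (hp : ∀ v, 0 < p v) (f : V → ℝ) (u v : V) (huv : A u v) :
    Gamma2edge A (thetaU U) (EnU U) p f u v
      = (f u - f v)^2 * (-(1/2) * (dTheta U (p u) (p v) - dTheta U (p v) (p u)) * (p u - p v)
        + 2 * thetaU U (p u) (p v)) := by
  unfold Gamma2edge
  simp only [pd_thM_left U A hirr, pd_thM_right U A hirr, pd_etaM_left U hθ A hirr p hp,
    pd_etaM_right U hθ A hirr p hp]
  simp only [thM_eq, etaM_eq U hθ A p _ _ (hp _) (hp _)]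
  simp only [adjW, huv, if_true]
  ring

end

/-- The contribution of the 2-path `l - c - r` in a 4-cycle `c, l, o, r`, with `c l` as the
distinguished edge; the negative part belongs to the diagonal pair `c, o` and the path `c - r - o`. -/
noncomputable def cornerTerm (θ d : ℝ → ℝ → ℝ) {V : Type*} (p f : V → ℝ) (c l r o : V) : ℝ :=
  (f c - f l)^2 * (d (p c) (p l) * (p r - p c) + θ (p r) (p c) + θ (p c) (p l))
    - (f c - f o)^2 * θ (p o) (p r)

theorem pathForm_add {V : Type*} [Fintype V] (θ d : ℝ → ℝ → ℝ)
    (p f : V → ℝ) (a b : V → V → ℝ) :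
    pathForm θ d p f (fun i j => a i j + b i j) (fun i j => a i j + b i j) =
      pathForm θ d p f a a + pathForm θ d p f b b + (pathForm θ d p f a b + pathForm θ d p f b a) := by
  unfold pathForm
  simp only [← Finset.sum_add_distrib]
  refine Finset.sum_congr rfl fun i _ => Finset.sum_congr rfl fun j _ =>
    Finset.sum_congr rfl fun k _ => ?_
  ring

/-! ### Decomposition over the product graph -/

section
variable {VG VH : Type*} [Fintype VG] [DecidableEq VG] [Fintype VH] [DecidableEq VH]

/-- Edge weights of `G` placed on all horizontal copies of `G` in `G □ H`. -/
def liftG (a : VG → VG → ℝ) (i j : VG × VH) : ℝ := if i.2 = j.2 then a i.1 j.1 else 0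
/-- Edge weights of `H` placed on all vertical copies of `H` in `G □ H`. -/
def liftH (b : VH → VH → ℝ) (i j : VG × VH) : ℝ := if i.1 = j.1 then b i.2 j.2 else 0

/-- Two horizontal edges sharing a vertex lie in the same copy of `G`. -/
theorem pathForm_GG (θ d : ℝ → ℝ → ℝ) (p f : VG × VH → ℝ) (a : VG → VG → ℝ) :
    pathForm θ d p f (liftG a) (liftG a)
      = ∑ x, pathForm θ d (fun u => p (u, x)) (fun u => f (u, x)) a a := by
  unfold pathForm liftG
  simp only [Fintype.sum_prod_type]
  rw [Finset.sum_comm]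
  refine Finset.sum_congr rfl fun x _ => Finset.sum_congr rfl fun u _ =>
    Finset.sum_congr rfl fun v _ => ?_
  rw [Finset.sum_comm]
  refine Finset.sum_congr rfl fun w _ => ?_
  simp [mul_add, mul_sub, ite_mul, mul_ite, Finset.sum_add_distrib, Finset.sum_sub_distrib,
    Finset.sum_ite_irrel]

/-- A horizontal and a vertical edge sharing a vertex span a unique square `{u, v} × {x, y}`, so the
mixed part is a sum over corners of squares. -/
theorem pathForm_GH (θ d : ℝ → ℝ → ℝ) (p f : VG × VH → ℝ) (a : VG → VG → ℝ) (b : VH → VH → ℝ)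
    (hb : ∀ x y, b x y = b y x) (ha : ∀ x y, a x y = a y x) :
    pathForm θ d p f (liftG a) (liftH b)
      = ∑ u, ∑ v, ∑ x, ∑ y, a u v * b x y *
          cornerTerm θ d p f (u, x) (v, x) (u, y) (v, y) := by
  unfold pathForm liftG liftH cornerTerm
  simp only [Fintype.sum_prod_type]
  refine Finset.sum_congr rfl fun u _ => ?_
  rw [Finset.sum_comm]
  refine Finset.sum_congr rfl fun v _ => Finset.sum_congr rfl fun x _ => ?_
  simp [mul_add, mul_sub, ite_mul, mul_ite, Finset.sum_add_distrib, Finset.sum_sub_distrib,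
    Finset.sum_ite_irrel]
  simp only [← Finset.sum_add_distrib, ← Finset.sum_sub_distrib]
  refine Finset.sum_congr rfl fun y _ => ?_
  rw [hb y x, ha v u]
  ring


theorem pathForm_HH (θ d : ℝ → ℝ → ℝ) (p f : VG × VH → ℝ) (b : VH → VH → ℝ) :
    pathForm θ d p f (liftH b) (liftH b)
      = ∑ u, pathForm θ d (fun x => p (u, x)) (fun x => f (u, x)) b b := by
  unfold pathForm liftH
  simp only [Fintype.sum_prod_type]
  refine Finset.sum_congr rfl fun u _ => Finset.sum_congr rfl fun x _ => ?_
  rw [Finset.sum_comm]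
  refine Finset.sum_congr rfl fun y _ => ?_
  simp only [Finset.sum_comm (s := (Finset.univ : Finset VG)) (t := (Finset.univ : Finset VH))]
  refine Finset.sum_congr rfl fun w _ => ?_
  simp [mul_add, mul_sub, ite_mul, mul_ite, Finset.sum_add_distrib, Finset.sum_sub_distrib,
    Finset.sum_ite_irrel]

theorem pathForm_HG (θ d : ℝ → ℝ → ℝ) (p f : VG × VH → ℝ) (a : VG → VG → ℝ) (b : VH → VH → ℝ)
    (hb : ∀ x y, b x y = b y x) (ha : ∀ x y, a x y = a y x) :
    pathForm θ d p f (liftH b) (liftG a)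
      = ∑ u, ∑ v, ∑ x, ∑ y, a u v * b x y *
          cornerTerm θ d p f (u, x) (u, y) (v, x) (v, y) := by
  unfold pathForm liftG liftH cornerTerm
  simp only [Fintype.sum_prod_type]
  refine Finset.sum_congr rfl fun u _ => ?_
  rw [Finset.sum_comm (s := (Finset.univ : Finset VG)) (t := (Finset.univ : Finset VH))
    (f := fun v x => ∑ y, a u v * b x y * _)]
  refine Finset.sum_congr rfl fun x _ => ?_
  simp [mul_add, mul_sub, ite_mul, mul_ite, Finset.sum_add_distrib, Finset.sum_sub_distrib,
    Finset.sum_ite_irrel]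
  simp only [hb _ x, ha _ u]
  congr 1
  · congr 1
    · congr 1
      · congr 1
        all_goals
          rw [Finset.sum_comm]
          refine Finset.sum_congr rfl fun v _ => Finset.sum_congr rfl fun y _ => ?_
          ring
      · rw [Finset.sum_comm]
        refine Finset.sum_congr rfl fun v _ => Finset.sum_congr rfl fun y _ => ?_
        ring
    · rw [Finset.sum_comm]
      refine Finset.sum_congr rfl fun v _ => Finset.sum_congr rfl fun y _ => ?_
      ring
  · refine Finset.sum_congr rfl fun v _ => Finset.sum_congr rfl fun y _ => ?_
    ring

theorem adjW_prod (AG : VG → VG → Prop) [DecidableRel AG] (AH : VH → VH → Prop) [DecidableRel AH]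
    (hGirr : ∀ u, ¬ AG u u) :
    adjW (prodAdj AG AH) = fun i j => liftG (adjW AG) i j + liftH (adjW AH) i j := by
  funext ⟨u, x⟩ ⟨v, y⟩
  unfold adjW liftG liftH prodAdj
  by_cases h1 : u = v
  · subst h1
    simp [hGirr]
  · by_cases h2 : x = y <;> simp [h1, h2]
end


theorem Gamma1_prod {VG VH : Type*} [Fintype VG] [DecidableEq VG] [Fintype VH] [DecidableEq VH]
    (U : ℝ → ℝ) (AG : VG → VG → Prop) [DecidableRel AG] (AH : VH → VH → Prop) [DecidableRel AH]
    (hGirr : ∀ u, ¬ AG u u) (p f : VG × VH → ℝ) :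
    Gamma1 (prodAdj AG AH) (thetaU U) p f
      = ∑ x, Gamma1 AG (thetaU U) (fun u => p (u, x)) (fun u => f (u, x))
        + ∑ u, Gamma1 AH (thetaU U) (fun x => p (u, x)) (fun x => f (u, x)) := by
  unfold Gamma1
  simp only [thM_eq, adjW_prod AG AH hGirr, add_mul, Finset.sum_add_distrib,
    Fintype.sum_prod_type]
  congr 1
  · rw [Finset.sum_comm]
    simp [liftG]
  · refine Finset.sum_congr rfl fun u _ => Finset.sum_congr rfl fun x _ => ?_
    rw [Finset.sum_comm]
    simp [liftH]

/-! ### Squares -/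

/-- The `C₄`-property in terms of corners: the degenerate triples of `Γ₂^{C₄}` (those running back
and forth along one edge) add up to exactly the four edge terms, leaving the eight corner terms. -/
theorem C4_corner (U : ℝ → ℝ)
    (hθ : ∀ s t : ℝ, 0 < s → 0 < t → 0 < thetaU U s t)
    (p : Fin 4 → ℝ) (hp : ∀ i, 0 < p i) (f : Fin 4 → ℝ)
    (hC : Gamma2edge C4adj (thetaU U) (EnU U) p f 0 1
          + Gamma2edge C4adj (thetaU U) (EnU U) p f 1 2
          + Gamma2edge C4adj (thetaU U) (EnU U) p f 2 3
          + Gamma2edge C4adj (thetaU U) (EnU U) p f 3 0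
          ≤ Gamma2 C4adj (thetaU U) (EnU U) p f) :
   0 ≤ cornerTerm (thetaU U) (dTheta U) p f 0 1 3 2
     + cornerTerm (thetaU U) (dTheta U) p f 0 3 1 2
     + cornerTerm (thetaU U) (dTheta U) p f 1 0 2 3
     + cornerTerm (thetaU U) (dTheta U) p f 1 2 0 3
     + cornerTerm (thetaU U) (dTheta U) p f 2 3 1 0
     + cornerTerm (thetaU U) (dTheta U) p f 2 1 3 0
     + cornerTerm (thetaU U) (dTheta U) p f 3 2 0 1
     + cornerTerm (thetaU U) (dTheta U) p f 3 0 2 1 := by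
  have hirr : ∀ u, ¬ C4adj u u := by unfold C4adj; decide
  rw [Gamma2_eq U hθ _ hirr p hp, Gamma2edge_eq U hθ _ hirr p hp _ _ _ (by decide),
    Gamma2edge_eq U hθ _ hirr p hp _ _ _ (by decide),
    Gamma2edge_eq U hθ _ hirr p hp _ _ _ (by decide),
    Gamma2edge_eq U hθ _ hirr p hp _ _ _ (by decide)] at hC
  have w : ∀ i j, adjW C4adj i j =
      (!![0,1,0,1;1,0,1,0;0,1,0,1;1,0,1,0] : Matrix (Fin 4) (Fin 4) ℝ) i j := by
    intro i j
    fin_cases i <;> fin_cases j <;> simp [adjW, C4adj]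
  simp [pathForm, Fin.sum_univ_four, w] at hC
  unfold cornerTerm
  have c := thetaU_comm U
  rw [c (p 1) (p 0), c (p 2) (p 1), c (p 3) (p 0), c (p 3) (p 2)] at hC
  rw [c (p 1) (p 0), c (p 2) (p 1), c (p 3) (p 0), c (p 3) (p 2)]
  linarith


theorem sum_nonneg_of_symm {V : Type*} [Fintype V] (F : V → V → ℝ)
    (h : ∀ u v, 0 ≤ F u v + F v u) : 0 ≤ ∑ u, ∑ v, F u v := by
  have h1 : 0 ≤ ∑ u, ∑ v, (F u v + F v u) :=
    Finset.sum_nonneg fun u _ => Finset.sum_nonneg fun v _ => h u v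
  simp only [Finset.sum_add_distrib] at h1
  rw [Finset.sum_comm (f := fun u v => F v u)] at h1
  linarith

theorem adjW_comm {V : Type*} (A : V → V → Prop) [DecidableRel A]
    (hs : ∀ u v, A u v → A v u) (u v : V) : adjW A u v = adjW A v u := by
  simp only [adjW, show A u v ↔ A v u from ⟨hs u v, hs v u⟩]

theorem adjW_nonneg {V : Type*} (A : V → V → Prop) [DecidableRel A] (u v : V) :
    0 ≤ adjW A u v := by
  unfold adjW
  split_ifs <;> norm_num

/-- if `θ = thetaU U` has the `C₄`-property with respect to `E = Σ U(p_v)`, and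
both `G` and `H` satisfy the curvature bound `Γ₂ ≥ κ Γ₁` (for all positive `p` and all `f`),
then so does the Cartesian product `G □ H`. -/
theorem stmt15 {VG VH : Type*} [Fintype VG] [DecidableEq VG] [Fintype VH] [DecidableEq VH]
    (U : ℝ → ℝ)
    (hU : ContDiffOn ℝ 3 U (Set.Ioi 0))
    (hU'' : ∀ s : ℝ, 0 < s → 0 < deriv (deriv U) s)
    (hθC1 : ContDiffOn ℝ 1 (Function.uncurry (thetaU U)) {q : ℝ × ℝ | 0 < q.1 ∧ 0 < q.2})
    (hθpos : ∀ s t : ℝ, 0 < s → 0 < t → 0 < thetaU U s t)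
    (AG : VG → VG → Prop) [DecidableRel AG]
    (hGsymm : ∀ u v, AG u v → AG v u) (hGirr : ∀ u, ¬ AG u u)
    (AH : VH → VH → Prop) [DecidableRel AH]
    (hHsymm : ∀ u v, AH u v → AH v u) (hHirr : ∀ u, ¬ AH u u)
    (hC4 : ∀ p : Fin 4 → ℝ, (∀ i, 0 < p i) → ∀ f : Fin 4 → ℝ,
        Gamma2edge C4adj (thetaU U) (EnU U) p f 0 1
          + Gamma2edge C4adj (thetaU U) (EnU U) p f 1 2
          + Gamma2edge C4adj (thetaU U) (EnU U) p f 2 3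
          + Gamma2edge C4adj (thetaU U) (EnU U) p f 3 0
          ≤ Gamma2 C4adj (thetaU U) (EnU U) p f)
    (κ : ℝ)
    (hG : ∀ p : VG → ℝ, (∀ v, 0 < p v) → ∀ f : VG → ℝ,
        κ * Gamma1 AG (thetaU U) p f ≤ Gamma2 AG (thetaU U) (EnU U) p f)
    (hH : ∀ p : VH → ℝ, (∀ v, 0 < p v) → ∀ f : VH → ℝ,
        κ * Gamma1 AH (thetaU U) p f ≤ Gamma2 AH (thetaU U) (EnU U) p f) :
    ∀ p : VG × VH → ℝ, (∀ v, 0 < p v) → ∀ f : VG × VH → ℝ,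
        κ * Gamma1 (prodAdj AG AH) (thetaU U) p f
          ≤ Gamma2 (prodAdj AG AH) (thetaU U) (EnU U) p f := by
  intro p hp f
  have hPirr : ∀ z, ¬ prodAdj AG AH z z := by
    rintro ⟨u, x⟩
    simp [prodAdj, hGirr, hHirr]
  have ha := adjW_comm AG hGsymm
  have hb := adjW_comm AH hHsymm
  have hGx : ∀ x, κ * Gamma1 AG (thetaU U) (fun u => p (u, x)) (fun u => f (u, x)) ≤
      (1/2) * pathForm (thetaU U) (dTheta U) (fun u => p (u, x)) (fun u => f (u, x))
        (adjW AG) (adjW AG) := fun x => by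
    rw [← Gamma2_eq U hθpos AG hGirr _ fun u => hp (u, x)]
    exact hG _ (fun u => hp (u, x)) _
  have hHu : ∀ u, κ * Gamma1 AH (thetaU U) (fun x => p (u, x)) (fun x => f (u, x)) ≤
      (1/2) * pathForm (thetaU U) (dTheta U) (fun x => p (u, x)) (fun x => f (u, x))
        (adjW AH) (adjW AH) := fun u => by
    rw [← Gamma2_eq U hθpos AH hHirr _ fun x => hp (u, x)]
    exact hH _ (fun x => hp (u, x)) _
  have hGsum := Finset.sum_le_sum fun x (_ : x ∈ Finset.univ) => hGx x
  have hHsum := Finset.sum_le_sum fun u (_ : u ∈ Finset.univ) => hHu u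
  have hmix : 0 ≤ pathForm (thetaU U) (dTheta U) p f (liftG (adjW AG)) (liftH (adjW AH))
      + pathForm (thetaU U) (dTheta U) p f (liftH (adjW AH)) (liftG (adjW AG)) := by
    rw [pathForm_GH _ _ _ _ _ _ hb ha, pathForm_HG _ _ _ _ _ _ hb ha]
    simp only [← Finset.sum_add_distrib]
    -- Reversing `u v` and `x y` collects the four corners of the square `{u, v} × {x, y}`.
    refine sum_nonneg_of_symm _ fun u v => ?_
    simp only [← Finset.sum_add_distrib]
    refine sum_nonneg_of_symm _ fun x y => ?_
    have h4 := C4_corner U hθpos ![p (u, x), p (v, x), p (v, y), p (u, y)]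
      (by intro i; fin_cases i <;> simp [hp]) ![f (u, x), f (v, x), f (v, y), f (u, y)]
      (hC4 _ (by intro i; fin_cases i <;> simp [hp]) _)
    have h5 := mul_nonneg (mul_nonneg (adjW_nonneg AG u v) (adjW_nonneg AH x y)) h4
    rw [ha v u, hb y x]
    refine h5.trans_eq ?_
    simp [cornerTerm]
    ring
  rw [Gamma2_eq U hθpos _ hPirr p hp, adjW_prod AG AH hGirr, pathForm_add, pathForm_GG,
    pathForm_HH, Gamma1_prod U AG AH hGirr]
  simp only [← Finset.mul_sum] at hGsum hHsum
  linarith
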